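/- arXiv:2502.05185 — 2 statements merged into one kernel-verified Lean document; each statement's English description precedes it below -/
import Mathlib

section
/- (Proposition 5, plurality loser reinforcement paradox probability under IAC, complete ballots.) The IAC probability, over complete-ballot profiles with total 1, of the event that the candidate whose first-place total is strictly smallest among the three candidates demonstrates a reinforcement paradox (a plurality loser reinforcement paradox) equals 79/1152. -/
/-- A three-candidate complete-ballot profile: numbers of ballots with rankings
A≻B≻C, A≻C≻B, B≻A≻C, B≻C≻A, C≻A≻B, C≻B≻A respectively. -/
structure Profile where
  x1 : ℝ
  x2 : ℝ
  y1 : ℝ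
  y2 : ℝ
  z1 : ℝ
  z2 : ℝ

namespace Profile

def nonneg (p : Profile) : Prop :=
  0 ≤ p.x1 ∧ 0 ≤ p.x2 ∧ 0 ≤ p.y1 ∧ 0 ≤ p.y2 ∧ 0 ≤ p.z1 ∧ 0 ≤ p.z2

instance : Add Profile :=
  ⟨fun p q => ⟨p.x1 + q.x1, p.x2 + q.x2, p.y1 + q.y1, p.y2 + q.y2, p.z1 + q.z1, p.z2 + q.z2⟩⟩

/-- First-place total of candidate A. -/
def X (p : Profile) : ℝ := p.x1 + p.x2
/-- First-place total of candidate B. -/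
def Y (p : Profile) : ℝ := p.y1 + p.y2
/-- First-place total of candidate C. -/
def Z (p : Profile) : ℝ := p.z1 + p.z2
/-- Total vote. -/
def V (p : Profile) : ℝ := p.X + p.Y + p.Z

end Profile

inductive Cand | A | B | C

/-- Candidate `W` wins strictly under IRV in profile `p`. -/
def wins : Cand → Profile → Prop
  | Cand.A, p => p.X > p.Y + p.Z ∨
      (p.Z < p.X ∧ p.Z < p.Y ∧ p.X + p.z1 > p.Y + p.z2) ∨
      (p.Y < p.X ∧ p.Y < p.Z ∧ p.X + p.y1 > p.Z + p.y2)
  | Cand.B, p => p.Y > p.X + p.Z ∨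
      (p.Z < p.Y ∧ p.Z < p.X ∧ p.Y + p.z2 > p.X + p.z1) ∨
      (p.X < p.Y ∧ p.X < p.Z ∧ p.Y + p.x1 > p.Z + p.x2)
  | Cand.C, p => p.Z > p.X + p.Y ∨
      (p.X < p.Z ∧ p.X < p.Y ∧ p.Z + p.x2 > p.Y + p.x1) ∨
      (p.Y < p.Z ∧ p.Y < p.X ∧ p.Z + p.y2 > p.X + p.y1)

/-- Profile `p` demonstrates a reinforcement paradox for candidate `W`: there is a
partition `p = p1 + p2` into profiles with nonnegative entries such that `W` wins
strictly in both `p1` and `p2` but `W` does not win strictly in `p`. -/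
def paradox (W : Cand) (p : Profile) : Prop :=
  ∃ p1 p2 : Profile, p1.nonneg ∧ p2.nonneg ∧ p1 + p2 = p ∧
    wins W p1 ∧ wins W p2 ∧ ¬ wins W p

/-- The simplex of complete-ballot profiles with total 1, parameterized by the
first five coordinates (X1, X2, Y1, Y2, Z1). -/
def T : Set (Fin 5 → ℝ) :=
  {v | (∀ i, 0 ≤ v i) ∧ v 0 + v 1 + v 2 + v 3 + v 4 ≤ 1}

/-- The profile with total 1 associated to a point of `T`, with
`Z2 = 1 - (X1 + X2 + Y1 + Y2 + Z1)`. -/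
noncomputable def profOf (v : Fin 5 → ℝ) : Profile :=
  ⟨v 0, v 1, v 2, v 3, v 4, 1 - (v 0 + v 1 + v 2 + v 3 + v 4)⟩

/-- First-place total of a candidate. -/
def fp : Cand → Profile → ℝ
  | Cand.A, p => p.X
  | Cand.B, p => p.Y
  | Cand.C, p => p.Z

/-- Candidate `W`'s first-place total is strictly smallest among the three. -/
def strictlySmallest (W : Cand) (p : Profile) : Prop :=
  ∀ W' : Cand, W' ≠ W → fp W p < fp W' p

/-
Exchanging the names of the plurality loser and C is a volume-preserving affine map of the simplex,
and the events belonging to the three possible losers are disjoint, so the probability is three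
times that of the event for the loser C. If C comes last, C cannot have led both parts against the
same rival, hence one part eliminates A and the other eliminates B, and C beats the remaining rival
in each. Eliminating the auxiliary ballots of such a partition leaves the linear conditions
Y - Z < x₂, X - Z < y₂, X + Y < 3Z and X + Y - Z < 2(x₂ + y₂). For fixed Z and X these cut out of
the (x₂, y₂, z₁)-space a rectangle with one corner removed times an interval of length Z, and
integrating over X and Z gives the volume 79/414720 = (79/1152)(1/120)/3.
-/

section OrderedGroup

open Set
open scoped Pointwise

theorem Ioo_add_Ioo_of_lt {α : Type*} [AddCommGroup α] [LinearOrder α] [IsOrderedAddMonoid α]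
    [DenselyOrdered α] {a b c d : α} (hab : a < b) (hcd : c < d) :
    Ioo a b + Ioo c d = Ioo (a + c) (b + d) := by
  refine Subset.antisymm ?_ fun m ⟨hm, hm'⟩ => ?_
  · rintro _ ⟨s, hs, t, ht, rfl⟩
    exact ⟨add_lt_add hs.1 ht.1, add_lt_add hs.2 ht.2⟩
  · obtain ⟨s, hs, hs'⟩ : ∃ s, max a (m - d) < s ∧ s < min b (m - c) :=
      exists_between (max_lt (lt_min hab (lt_sub_iff_add_lt.2 hm))
        (lt_min (sub_lt_iff_lt_add.2 hm') (sub_lt_sub_left hcd m)))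
    rw [max_lt_iff] at hs
    rw [lt_min_iff] at hs'
    exact ⟨s, ⟨hs.1, hs'.1⟩, m - s, ⟨lt_sub_comm.1 hs'.2, sub_lt_comm.1 hs.2⟩,
      add_sub_cancel s m⟩

end OrderedGroup

section Volume

open MeasureTheory Set

variable {n : ℕ} {S : Set (Fin (n + 1) → ℝ)}

/-- `S` has the finite measure `c`; unlike `volume.real S = c` this cannot hold through the junk
value of the real-valued measure at `∞`. -/
def HasVolume {α : Type*} [MeasureSpace α] (S : Set α) (c : ℝ) : Prop :=
  0 ≤ c ∧ volume S = ENNReal.ofReal c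

/-- The slice of `S` at first coordinate `t`, through which volumes are computed one coordinate at
a time. -/
def slice (S : Set (Fin (n + 1) → ℝ)) (t : ℝ) : Set (Fin n → ℝ) :=
  Matrix.vecCons t ⁻¹' S

theorem measurableSet_slice (hS : MeasurableSet S) (t : ℝ) : MeasurableSet (slice S t) :=
  (continuous_const.matrixVecCons continuous_id).measurable hS

theorem volume_eq_lintegral_slice (hS : MeasurableSet S) :
    volume S = ∫⁻ t, volume (slice S t) := by
  have hcons := (volume_preserving_piFinSuccAbove (fun _ : Fin (n + 1) => ℝ) 0).symm
  rw [← hcons.measure_preimage hS.nullMeasurableSet, Measure.volume_eq_prod,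
    Measure.prod_apply (hcons.measurable hS)]
  refine lintegral_congr fun t => congrArg volume ?_
  ext w
  exact iff_of_eq (congrArg (· ∈ S) (Fin.insertNth_zero' t w))

theorem HasVolume.of_slice (hS : MeasurableSet S) {a b c : ℝ} {g : ℝ → ℝ}
    (hab : a ≤ b) (hg : IntervalIntegrable g volume a b) (hsub : ∀ w ∈ S, w 0 ∈ Icc a b)
    (hslice : ∀ t ∈ Ioo a b, HasVolume (slice S t) (g t)) (hc : ∫ t in a..b, g t = c) :
    HasVolume S c := by
  have hsupp : Function.support (fun t => volume (slice S t)) ⊆ Icc a b := fun t ht => by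
    obtain ⟨w, hw⟩ := nonempty_of_measure_ne_zero ht
    exact hsub _ hw
  have hc' : ∫ t in Ioo a b, g t = c := by
    rw [← hc, intervalIntegral.integral_of_le hab, integral_Ioc_eq_integral_Ioo]
  refine ⟨hc' ▸ setIntegral_nonneg measurableSet_Ioo fun t ht => (hslice t ht).1, ?_⟩
  calc volume S = ∫⁻ t in Icc a b, volume (slice S t) := by
        rw [volume_eq_lintegral_slice hS, setLIntegral_eq_of_support_subset hsupp]
    _ = ∫⁻ t in Ioo a b, volume (slice S t) := by rw [setLIntegral_congr Ioo_ae_eq_Icc]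
    _ = ∫⁻ t in Ioo a b, ENNReal.ofReal (g t) :=
        setLIntegral_congr_fun measurableSet_Ioo fun t ht => (hslice t ht).2
    _ = ENNReal.ofReal c := by
        rw [← hc', ofReal_integral_eq_lintegral_ofReal]
        · exact (intervalIntegrable_iff_integrableOn_Ioo_of_le hab).1 hg
        · filter_upwards [ae_restrict_mem measurableSet_Ioo] with t ht using (hslice t ht).1

theorem hasVolume_pi_Ioc_Icc {a b c d : ℝ} (hab : a ≤ b) (hcd : c ≤ d) :
    HasVolume {w : Fin 2 → ℝ | w 0 ∈ Ioc a b ∧ w 1 ∈ Icc c d} ((b - a) * (d - c)) := by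
  have hpi : {w : Fin 2 → ℝ | w 0 ∈ Ioc a b ∧ w 1 ∈ Icc c d} =
      pi univ ![Ioc a b, Icc c d] := by
    ext w
    simp [mem_pi, Fin.forall_fin_two]
  refine ⟨mul_nonneg (sub_nonneg.2 hab) (sub_nonneg.2 hcd), ?_⟩
  rw [hpi, volume_pi_pi, ENNReal.ofReal_mul (sub_nonneg.2 hab)]
  simp

end Volume

section MatrixAction

open MeasureTheory Matrix

theorem measurePreserving_mulVec_add {ι : Type*} [Fintype ι] [DecidableEq ι]
    {M : Matrix ι ι ℝ} (hM : |M.det| = 1) (c : ι → ℝ) :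
    MeasurePreserving (fun v => M *ᵥ v + c) volume volume := by
  have hdet : M.det ≠ 0 := abs_ne_zero.1 (hM ▸ one_ne_zero)
  have hlin : MeasurePreserving (toLin' M) volume volume := by
    refine ⟨(toLin' M).continuous_of_finiteDimensional.measurable, ?_⟩
    rw [Real.map_matrix_volume_pi_eq_smul_volume_pi hdet, abs_inv, hM]
    simp
  exact (measurePreserving_add_right volume c).comp hlin

end MatrixAction

section Integrals

theorem integral_sum_mul_pow {n : ℕ} (c : Fin n → ℝ) (a b : ℝ) :
    ∫ x in a..b, ∑ i, c i * x ^ (i : ℕ) =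
      ∑ i, c i * ((b ^ (i + 1 : ℕ) - a ^ (i + 1 : ℕ)) / (i + 1)) := by
  rw [intervalIntegral.integral_finsetSum fun i _ =>
    Continuous.intervalIntegrable (by fun_prop) a b]
  simp

/-- The left-hand side is the area of the rectangle `[a, b] × [c, d]` without the corner
`s + t ≤ e`, when that corner is a triangle. -/
theorem integral_sub_max_sub {a b c d e : ℝ} (ha : a ≤ e - c) (hb : e - c ≤ b) :
    ∫ s in a..b, (d - max c (e - s)) = (b - a) * (d - c) - (e - c - a) ^ 2 / 2 := by
  have hcont : Continuous fun s : ℝ => d - max c (e - s) := by fun_prop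
  have hleft : ∫ s in a..(e - c), (d - max c (e - s)) = ∫ s in a..(e - c), (s + (d - e)) := by
    refine intervalIntegral.integral_congr fun s hs => ?_
    rw [Set.uIcc_of_le ha] at hs
    rw [max_eq_right (by linarith [hs.2])]
    ring
  have hright : ∫ s in (e - c)..b, (d - max c (e - s)) = ∫ _ in (e - c)..b, (d - c) := by
    refine intervalIntegral.integral_congr fun s hs => ?_
    rw [Set.uIcc_of_le hb] at hs
    rw [max_eq_left (by linarith [hs.1])]
  rw [← intervalIntegral.integral_add_adjacent_intervals
    (hcont.intervalIntegrable a (e - c)) (hcont.intervalIntegrable (e - c) b), hleft, hright,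
    intervalIntegral.integral_add intervalIntegral.intervalIntegrable_id
      intervalIntegrable_const]
  simp only [integral_id, intervalIntegral.integral_const, smul_eq_mul]
  ring

end Integrals

section Partitions

open Set
open scoped Pointwise

attribute [ext] Profile

namespace Profile

@[simp] theorem add_x1 (p q : Profile) : (p + q).x1 = p.x1 + q.x1 := rfl
@[simp] theorem add_x2 (p q : Profile) : (p + q).x2 = p.x2 + q.x2 := rfl
@[simp] theorem add_y1 (p q : Profile) : (p + q).y1 = p.y1 + q.y1 := rfl
@[simp] theorem add_y2 (p q : Profile) : (p + q).y2 = p.y2 + q.y2 := rfl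
@[simp] theorem add_z1 (p q : Profile) : (p + q).z1 = p.z1 + q.z1 := rfl
@[simp] theorem add_z2 (p q : Profile) : (p + q).z2 = p.z2 + q.z2 := rfl

protected theorem add_comm (p q : Profile) : p + q = q + p := by
  ext <;> simp [add_comm]

theorem X_add (p q : Profile) : (p + q).X = p.X + q.X := add_add_add_comm ..

theorem Y_add (p q : Profile) : (p + q).Y = p.Y + q.Y := add_add_add_comm ..

theorem Z_add (p q : Profile) : (p + q).Z = p.Z + q.Z := add_add_add_comm ..

/-- `C` wins under IRV after `A` is eliminated in the first round. -/
def CBeatsBWithoutA (p : Profile) : Prop :=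
  p.X < p.Z ∧ p.X < p.Y ∧ p.Y + p.x1 < p.Z + p.x2

/-- `C` wins under IRV after `B` is eliminated in the first round. -/
def CBeatsAWithoutB (p : Profile) : Prop :=
  p.Y < p.Z ∧ p.Y < p.X ∧ p.X + p.y1 < p.Z + p.y2

end Profile

variable {p : Profile}

theorem not_wins_C_of_lt (hp : p.nonneg) (hX : p.Z < p.X) (hY : p.Z < p.Y) :
    ¬ wins Cand.C p := by
  obtain ⟨_, _, _, _, hz₁, hz₂⟩ := hp
  simp only [wins, Profile.X, Profile.Y, Profile.Z] at *
  rintro (h | ⟨h, -⟩ | ⟨h, -⟩) <;> linarith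

theorem leads_or_beats_of_wins_C (hp : p.nonneg) (h : wins Cand.C p) :
    (p.X < p.Z ∧ p.Y < p.Z) ∨ p.CBeatsBWithoutA ∨ p.CBeatsAWithoutB := by
  refine h.imp_left fun hmajority => ?_
  obtain ⟨_, _, _, _, _, _⟩ := hp
  simp only [Profile.X, Profile.Y, Profile.Z] at *
  constructor <;> linarith

/-- A part in which `C` leads both rivals, or two parts eliminating the same rival, would leave `C`
ahead of a rival in the sum. -/
theorem paradox_C_iff_exists_partition (hp : p.nonneg) (hX : p.Z < p.X) (hY : p.Z < p.Y) :
    paradox Cand.C p ↔ ∃ q r : Profile, q.nonneg ∧ r.nonneg ∧ q + r = p ∧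
      q.CBeatsBWithoutA ∧ r.CBeatsAWithoutB := by
  constructor
  · rintro ⟨q, r, hq, hr, rfl, hwq, hwr, -⟩
    simp only [Profile.X_add, Profile.Y_add, Profile.Z_add] at hX hY
    have hqr : q.CBeatsBWithoutA ∧ r.CBeatsAWithoutB ∨ r.CBeatsBWithoutA ∧ q.CBeatsAWithoutB := by
      have hnotX : ¬ (q.X < q.Z ∧ r.X < r.Z) := fun h => by linarith
      have hnotY : ¬ (q.Y < q.Z ∧ r.Y < r.Z) := fun h => by linarith
      have hq' := leads_or_beats_of_wins_C hq hwq
      have hr' := leads_or_beats_of_wins_C hr hwr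
      simp only [Profile.CBeatsBWithoutA, Profile.CBeatsAWithoutB] at *
      tauto
    rcases hqr with ⟨hqA, hrB⟩ | ⟨hrA, hqB⟩
    · exact ⟨q, r, hq, hr, rfl, hqA, hrB⟩
    · exact ⟨r, q, hr, hq, Profile.add_comm r q, hrA, hqB⟩
  · rintro ⟨q, r, hq, hr, hqr, hqA, hrB⟩
    exact ⟨q, r, hq, hr, hqr, Or.inr (Or.inl hqA), Or.inr (Or.inr hrB),
      not_wins_C_of_lt hp hX hY⟩

theorem exists_partition_of_lt (hp : p.nonneg) (hX : p.Z < p.X) (hY : p.Z < p.Y)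
    (hZ : p.X + p.Y < 3 * p.Z) (hx₂ : p.Y - p.Z < p.x2) (hy₂ : p.X - p.Z < p.y2)
    (hxy : p.X + p.Y - p.Z < 2 * (p.x2 + p.y2)) :
    ∃ q r : Profile, q.nonneg ∧ r.nonneg ∧ q + r = p ∧
      q.CBeatsBWithoutA ∧ r.CBeatsAWithoutB := by
  obtain ⟨hx₁₀, _, hy₁₀, _, hz₁₀, hz₂₀⟩ := hp
  obtain ⟨m, hm, hm'⟩ :
      ∃ m, max (p.Y - p.Z + (p.X - p.Z)) ((p.X + p.Y - p.Z) / 2) < m ∧ m < min (p.x2 + p.y2) p.Z :=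
    exists_between (max_lt (lt_min (by linarith) (by linarith))
      (lt_min (by linarith) (by linarith)))
  rw [lt_min_iff] at hm'
  rw [max_lt_iff] at hm
  -- `q` gets `s` ballots A≻C≻B, `c` ballots ranking C first and all but `t` of those ranking B
  -- first; symmetrically `r` gets `t` ballots B≻C≻A and all but `s` of those ranking A first.
  obtain ⟨s, ⟨hs, hs'⟩, t, ⟨ht, ht'⟩, rfl⟩ :
      m ∈ Ioo (p.Y - p.Z) p.x2 + Ioo (p.X - p.Z) p.y2 := by
    rw [Ioo_add_Ioo_of_lt hx₂ hy₂]
    exact ⟨hm.1, hm'.1⟩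
  obtain ⟨c, hc, hc'⟩ : ∃ c, max s (p.Y - t - s) < c ∧ c < min (p.Z - t) (p.Z + s + t - p.X) :=
    exists_between (max_lt (lt_min (by linarith) (by linarith))
      (lt_min (by linarith) (by linarith)))
  rw [max_lt_iff] at hc
  rw [lt_min_iff] at hc'
  simp only [Profile.X, Profile.Y, Profile.Z] at *
  obtain ⟨d, ⟨hd, hd'⟩, e, ⟨he, he'⟩, rfl⟩ : c ∈ Icc 0 p.z1 + Icc 0 p.z2 := by
    rw [Icc_add_Icc hz₁₀ hz₂₀]
    constructor <;> linarith
  refine ⟨⟨0, s, p.y1, p.y2 - t, d, e⟩, ⟨p.x1, p.x2 - s, 0, t, p.z1 - d, p.z2 - e⟩,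
    ?_, ?_, ?_, ?_, ?_⟩
  · simp only [Profile.nonneg]
    refine ⟨?_, ?_, ?_, ?_, ?_, ?_⟩ <;> linarith
  · simp only [Profile.nonneg]
    refine ⟨?_, ?_, ?_, ?_, ?_, ?_⟩ <;> linarith
  · ext <;> simp
  · simp only [Profile.CBeatsBWithoutA, Profile.X, Profile.Y, Profile.Z]
    refine ⟨?_, ?_, ?_⟩ <;> linarith
  · simp only [Profile.CBeatsAWithoutB, Profile.X, Profile.Y, Profile.Z]
    refine ⟨?_, ?_, ?_⟩ <;> linarith

theorem paradox_C_iff (hp : p.nonneg) (hX : p.Z < p.X) (hY : p.Z < p.Y) :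
    paradox Cand.C p ↔ p.X + p.Y < 3 * p.Z ∧ p.Y - p.Z < p.x2 ∧ p.X - p.Z < p.y2 ∧
      p.X + p.Y - p.Z < 2 * (p.x2 + p.y2) := by
  rw [paradox_C_iff_exists_partition hp hX hY]
  refine ⟨?_, fun ⟨hZ, hx₂, hy₂, hxy⟩ => exists_partition_of_lt hp hX hY hZ hx₂ hy₂ hxy⟩
  rintro ⟨q, r, ⟨_, _, _, _, _, _⟩, ⟨_, _, _, _, _, _⟩, rfl, ⟨_, _, _⟩, ⟨_, _, _⟩⟩
  simp only [Profile.X, Profile.Y, Profile.Z, Profile.add_x1, Profile.add_x2, Profile.add_y1,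
    Profile.add_y2, Profile.add_z1, Profile.add_z2] at *
  refine ⟨?_, ?_, ?_, ?_⟩ <;> linarith

end Partitions

section Relabelling

namespace Profile

/-- The profile in which the names of `W` and `C` are exchanged on every ballot, so that
questions about an arbitrary candidate reduce to questions about `C`. -/
def swapC : Cand → Profile → Profile
  | Cand.A, p => ⟨p.z2, p.z1, p.y2, p.y1, p.x2, p.x1⟩
  | Cand.B, p => ⟨p.x2, p.x1, p.z1, p.z2, p.y1, p.y2⟩
  | Cand.C, p => p

theorem swapC_involutive (W : Cand) : Function.Involutive (swapC W) := by
  cases W <;> exact fun _ => rfl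

theorem swapC_add (W : Cand) (p q : Profile) : swapC W (p + q) = swapC W p + swapC W q := by
  cases W <;> rfl

theorem nonneg_swapC {W : Cand} {p : Profile} : (swapC W p).nonneg ↔ p.nonneg := by
  cases W <;> (unfold nonneg swapC; tauto)

theorem V_swapC (W : Cand) (p : Profile) : (swapC W p).V = p.V := by
  cases W <;> simp only [V, X, Y, Z, swapC] <;> ring

end Profile

open Profile

variable {W : Cand} {p : Profile}

theorem wins_C_swapC : wins Cand.C (swapC W p) ↔ wins W p := by
  cases W <;> grind [wins, swapC, X, Y, Z]

theorem paradox_C_swapC : paradox Cand.C (swapC W p) ↔ paradox W p := by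
  let σ : Equiv.Perm Profile := (swapC_involutive W).toPerm
  refine (σ.exists_congr fun q => σ.exists_congr fun r => ?_).symm
  simp only [σ, Function.Involutive.coe_toPerm, nonneg_swapC, ← swapC_add, wins_C_swapC,
    (swapC_involutive W).injective.eq_iff]

theorem forall_cand {P : Cand → Prop} : (∀ W, P W) ↔ P Cand.A ∧ P Cand.B ∧ P Cand.C :=
  ⟨fun h => ⟨h _, h _, h _⟩, fun ⟨hA, hB, hC⟩ W => by cases W <;> assumption⟩

theorem strictlySmallest_iff :
    strictlySmallest W p ↔ (swapC W p).Z < (swapC W p).X ∧ (swapC W p).Z < (swapC W p).Y := by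
  cases W <;> simp [strictlySmallest, forall_cand, fp, swapC, X, Y, Z, add_comm, and_comm]

end Relabelling

section Coordinates

open MeasureTheory Matrix Profile

theorem mem_T_iff_nonneg_profOf {v : Fin 5 → ℝ} : v ∈ T ↔ (profOf v).nonneg := by
  simp [T, profOf, nonneg, Fin.forall_fin_succ, and_assoc]

theorem V_profOf (v : Fin 5 → ℝ) : (profOf v).V = 1 := by
  simp only [V, X, Y, Z, profOf]
  ring

/-- The set of points of the simplex at which `W` is the plurality loser and demonstrates a
reinforcement paradox. -/
def loserParadoxEvent (W : Cand) : Set (Fin 5 → ℝ) :=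
  {v ∈ T | strictlySmallest W (profOf v) ∧ paradox W (profOf v)}

open Function in
theorem pairwise_disjoint_loserParadoxEvent : Pairwise (Disjoint on loserParadoxEvent) :=
  fun _ _ hne => Set.disjoint_left.2 fun _ hv hv' =>
    (hv.2.1 _ hne.symm).not_gt (hv'.2.1 _ hne)

/-- Coordinates `(Z, X, x₂, y₂, z₁)` of a profile with total 1, adapted to `C` being the
plurality loser: the paradox does not depend on `z₁`, and constrains `x₂` and `y₂` only in terms
of the first-place totals. -/
def Profile.loserCoords (p : Profile) : Fin 5 → ℝ := ![p.Z, p.X, p.x2, p.y2, p.z1]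

/-- The image under `Profile.loserCoords` of the profiles with total 1 in which `C` is the
plurality loser and demonstrates a reinforcement paradox. -/
def paradoxRegion : Set (Fin 5 → ℝ) :=
  {w | 1 / 4 < w 0 ∧ w 0 < w 1 ∧ w 0 < 1 - w 0 - w 1 ∧
    w 2 ∈ Set.Ioc (1 - 2 * w 0 - w 1) (w 1) ∧
    w 3 ∈ Set.Ioc (max (w 1 - w 0) (1 / 2 - w 0 - w 2)) (1 - w 0 - w 1) ∧
    w 4 ∈ Set.Icc 0 (w 0)}

theorem loserCoords_mem_paradoxRegion_iff {p : Profile} (hV : p.V = 1) :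
    p.loserCoords ∈ paradoxRegion ↔ p.nonneg ∧ (p.Z < p.X ∧ p.Z < p.Y) ∧ paradox Cand.C p := by
  have hmem : p.loserCoords ∈ paradoxRegion ↔ 1 / 4 < p.Z ∧ p.Z < p.X ∧ p.Z < 1 - p.Z - p.X ∧
      p.x2 ∈ Set.Ioc (1 - 2 * p.Z - p.X) p.X ∧
      p.y2 ∈ Set.Ioc (max (p.X - p.Z) (1 / 2 - p.Z - p.x2)) (1 - p.Z - p.X) ∧
      p.z1 ∈ Set.Icc 0 p.Z := Iff.rfl
  simp only [hmem, Set.mem_Ioc, Set.mem_Icc, max_lt_iff]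
  constructor
  · have hsum : p.X + p.Y + p.Z = 1 := hV
    rintro ⟨hZ, hX, hY, ⟨hx₂, hx₂'⟩, ⟨⟨hy₂, hxy⟩, hy₂'⟩, hz₁, hz₁'⟩
    have hp : p.nonneg := by
      simp only [nonneg, V, X, Y, Z] at *
      refine ⟨?_, ?_, ?_, ?_, ?_, ?_⟩ <;> linarith
    have hXY : p.Z < p.X ∧ p.Z < p.Y := ⟨hX, by linarith⟩
    refine ⟨hp, hXY, (paradox_C_iff hp hXY.1 hXY.2).2 ?_⟩
    simp only [V, X, Y, Z] at *
    refine ⟨?_, ?_, ?_, ?_⟩ <;> linarith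
  · rintro ⟨hp, ⟨hX, hY⟩, hC⟩
    obtain ⟨hZ, hx₂, hy₂, hxy⟩ := (paradox_C_iff hp hX hY).1 hC
    obtain ⟨_, _, _, _, _, _⟩ := hp
    simp only [V, X, Y, Z] at *
    refine ⟨?_, ?_, ?_, ⟨?_, ?_⟩, ⟨⟨?_, ?_⟩, ?_⟩, ?_, ?_⟩ <;> linarith

theorem loserParadoxEvent_eq_preimage (W : Cand) :
    loserParadoxEvent W = (fun v => (swapC W (profOf v)).loserCoords) ⁻¹' paradoxRegion := by
  ext v
  rw [Set.mem_preimage, loserCoords_mem_paradoxRegion_iff (by rw [V_swapC, V_profOf]),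
    nonneg_swapC, ← mem_T_iff_nonneg_profOf, ← strictlySmallest_iff, paradox_C_swapC]
  rfl

/-- The linear part of `Profile.loserCoords ∘ Profile.swapC W ∘ profOf`. -/
def loserMatrix : Cand → Matrix (Fin 5) (Fin 5) ℝ
  | Cand.A => !![1, 1, 0, 0, 0; -1, -1, -1, -1, 0; 0, 0, 0, 0, 1; 0, 0, 1, 0, 0; 0, 1, 0, 0, 0]
  | Cand.B => !![0, 0, 1, 1, 0; 1, 1, 0, 0, 0; 1, 0, 0, 0, 0; -1, -1, -1, -1, -1; 0, 0, 1, 0, 0]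
  | Cand.C => !![-1, -1, -1, -1, 0; 1, 1, 0, 0, 0; 0, 1, 0, 0, 0; 0, 0, 0, 1, 0; 0, 0, 0, 0, 1]

/-- The constant part of `Profile.loserCoords ∘ Profile.swapC W ∘ profOf`. -/
def loserShift : Cand → Fin 5 → ℝ
  | Cand.A => ![0, 1, 0, 0, 0]
  | Cand.B => ![0, 0, 0, 1, 0]
  | Cand.C => ![1, 0, 0, 0, 0]

theorem loserCoords_swapC_profOf (W : Cand) (v : Fin 5 → ℝ) :
    (swapC W (profOf v)).loserCoords = loserMatrix W *ᵥ v + loserShift W := by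
  ext i
  cases W <;> fin_cases i <;>
    simp [loserMatrix, loserShift, loserCoords, swapC, profOf, X, Z, vecHead, vecTail] <;> ring

theorem abs_det_loserMatrix (W : Cand) : |(loserMatrix W).det| = 1 := by
  cases W <;> simp [loserMatrix, det_succ_row_zero, Fin.sum_univ_succ, Fin.succAbove]

theorem measurePreserving_loserCoords_swapC (W : Cand) :
    MeasurePreserving (fun v => (swapC W (profOf v)).loserCoords) volume volume := by
  simpa only [loserCoords_swapC_profOf] using
    measurePreserving_mulVec_add (abs_det_loserMatrix W) (loserShift W)

end Coordinates

section ParadoxVolume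

open MeasureTheory Set

theorem measurableSet_paradoxRegion : MeasurableSet paradoxRegion := by
  have : Measurable (fun w : Fin 5 → ℝ => w ∈ paradoxRegion) := by
    unfold paradoxRegion
    simp only [mem_Ioc, mem_Icc, mem_ofPred_eq]
    measurability
  exact measurableSet_setOfPred.2 this

theorem hasVolume_slice_slice_slice {x z s : ℝ} (hz : 1 / 4 < z) (hzx : z < x)
    (hzy : z < 1 - z - x) (hs : s ∈ Ioc (1 - 2 * z - x) x) :
    HasVolume (slice (slice (slice paradoxRegion z) x) s)
      ((1 - z - x - max (x - z) (1 / 2 - z - s)) * z) := by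
  have hslice : slice (slice (slice paradoxRegion z) x) s = {w : Fin 2 → ℝ |
      w 0 ∈ Ioc (max (x - z) (1 / 2 - z - s)) (1 - z - x) ∧ w 1 ∈ Icc 0 z} := by
    ext w
    exact ⟨fun h => h.2.2.2.2, fun h => ⟨hz, hzx, hzy, hs, h⟩⟩
  have hs₁ := hs.1
  simpa only [hslice, sub_zero] using hasVolume_pi_Ioc_Icc
    (max_le (by linarith) (by linarith : 1 / 2 - z - s ≤ 1 - z - x)) (by linarith : 0 ≤ z)

theorem hasVolume_slice_slice {x z : ℝ} (hz : 1 / 4 < z) (hzx : z < x) (hzy : z < 1 - z - x) :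
    HasVolume (slice (slice paradoxRegion z) x)
      (((1 - 2 * x) * (1 - 2 * (1 - z - x)) - (2 * z - 1 / 2) ^ 2 / 2) * z) := by
  refine HasVolume.of_slice
    (measurableSet_slice (measurableSet_slice measurableSet_paradoxRegion z) x)
    (by linarith : 1 - 2 * z - x ≤ x) (Continuous.intervalIntegrable (by fun_prop) _ _)
    (fun w hw => Ioc_subset_Icc_self hw.2.2.2.1)
    (fun s hs => hasVolume_slice_slice_slice hz hzx hzy (Ioo_subset_Ioc_self hs)) ?_
  rw [intervalIntegral.integral_mul_const,
    integral_sub_max_sub (by linarith) (by linarith)]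
  ring

theorem hasVolume_slice {z : ℝ} (hz : z ∈ Ioo (1 / 4 : ℝ) (1 / 3)) :
    HasVolume (slice paradoxRegion z) (z * (1 - 3 * z) * (-4 * z ^ 2 + 3 * z - 11 / 24)) := by
  refine HasVolume.of_slice (measurableSet_slice measurableSet_paradoxRegion z)
    (by linarith [hz.2] : z ≤ 1 - 2 * z) (Continuous.intervalIntegrable (by fun_prop) _ _)
    (fun w ⟨_, (hzx : z < w 0), (hzy : z < 1 - z - w 0), _⟩ => ⟨hzx.le, by linarith⟩)
    (fun x hx => hasVolume_slice_slice hz.1 hx.1 (by linarith [hx.2])) ?_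
  calc
    _ = ∫ x in z..(1 - 2 * z), ∑ i : Fin 3,
        ![z * (2 * z - 1 - (2 * z - 1 / 2) ^ 2 / 2), z * (4 - 4 * z), -4 * z] i * x ^ (i : ℕ) := by
      congr! 2 with x
      simp [Fin.sum_univ_succ]
      ring
    _ = _ := by
      rw [integral_sum_mul_pow]
      simp [Fin.sum_univ_succ]
      ring

theorem hasVolume_paradoxRegion : HasVolume paradoxRegion (79 / 414720) := by
  refine HasVolume.of_slice measurableSet_paradoxRegion (by norm_num : (1 / 4 : ℝ) ≤ 1 / 3)
    (Continuous.intervalIntegrable (by fun_prop) _ _)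
    (fun w ⟨hz, hzx, hzy, _⟩ => ⟨hz.le, by linarith⟩) (fun z hz => hasVolume_slice hz) ?_
  calc
    _ = ∫ z in (1 / 4 : ℝ)..(1 / 3), ∑ i, ![0, -11 / 24, 35 / 8, -13, 12] i * z ^ (i : ℕ) := by
      congr! 2 with z
      simp [Fin.sum_univ_succ]
      ring
    _ = _ := by
      rw [integral_sum_mul_pow]
      simp [Fin.sum_univ_succ]
      norm_num

theorem measurableSet_loserParadoxEvent (W : Cand) : MeasurableSet (loserParadoxEvent W) :=
  loserParadoxEvent_eq_preimage W ▸
    (measurePreserving_loserCoords_swapC W).measurable measurableSet_paradoxRegion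

theorem volume_loserParadoxEvent (W : Cand) :
    volume (loserParadoxEvent W) = ENNReal.ofReal (79 / 414720) := by
  rw [loserParadoxEvent_eq_preimage, (measurePreserving_loserCoords_swapC W).measure_preimage
    measurableSet_paradoxRegion.nullMeasurableSet, hasVolume_paradoxRegion.2]

end ParadoxVolume

instance : Fintype Cand :=
  ⟨⟨↑[Cand.A, Cand.B, Cand.C], by simp⟩, by rintro ⟨⟩ <;> simp⟩

theorem stmt17 :
    MeasureTheory.volume
      {v ∈ T | ∃ W : Cand, strictlySmallest W (profOf v) ∧ paradox W (profOf v)} =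
      (79 / 1152) * (1 / 120 : ENNReal) := by
  have hunion : {v ∈ T | ∃ W : Cand, strictlySmallest W (profOf v) ∧ paradox W (profOf v)} =
      ⋃ W, loserParadoxEvent W := by
    ext v
    simp only [loserParadoxEvent, Set.mem_iUnion, Set.mem_ofPred_eq, exists_and_left]
  rw [hunion, MeasureTheory.measure_iUnion pairwise_disjoint_loserParadoxEvent
    measurableSet_loserParadoxEvent, tsum_fintype]
  have hcard : (Finset.univ : Finset Cand).card = 3 := rfl
  simp only [volume_loserParadoxEvent, Finset.sum_const, hcard, nsmul_eq_mul]
  rw [← ENNReal.toReal_eq_toReal_iff' (by finiteness) (by finiteness)]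
  norm_num [ENNReal.toReal_mul]
end

section
/- (Proposition 5, double reinforcement paradox probability under IAC, complete ballots.) The IAC probability, over complete-ballot profiles with total 1, of the event that both a runner-up reinforcement paradox and a plurality loser reinforcement paradox occur — i.e., some candidate whose first-place total is not strictly smallest demonstrates a reinforcement paradox, and the candidate whose first-place total is strictly smallest also demonstrates a reinforcement paradox — equals 31/768. -/
/-!
The nonnegative profiles in which a given candidate wins form a union of three convex cones, and the
sums of two such profiles fill the convex hull of that union, which is cut out by four linear
inequalities. Hence a candidate shows a reinforcement paradox exactly at the profiles of the hull in
which it does not win. Let `C` be the plurality loser and `B` the other candidate with a paradox.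
This describes a polytope, and up to the null set of final-round ties the event is the disjoint
union of its six images under the renamings of the candidates. These act on the total-one profiles
by affine maps of finite order, which therefore preserve volume. In suitable unimodular coordinates
the slices of the polytope are rectangles with a corner cut off, and integrating their areas gives
the volume `31 / 552960 = (31 / 768) * (1 / 120) / 6`.
-/

section AddHaar

open MeasureTheory

variable {E : Type*} [NormedAddCommGroup E] [NormedSpace ℝ E] [FiniteDimensional ℝ E]
  [MeasurableSpace E] [BorelSpace E] (μ : Measure E) [μ.IsAddHaarMeasure]

theorem addHaar_preimage_linearMap_add {L : E →ₗ[ℝ] E} (hL : |LinearMap.det L| = 1) (c : E)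
    (S : Set E) : μ ((fun v => L v + c) ⁻¹' S) = μ S := by
  have hdet : LinearMap.det L ≠ 0 := by
    rw [← abs_pos, hL]
    exact one_pos
  change μ (L ⁻¹' ((fun v => v + c) ⁻¹' S)) = _
  rw [Measure.addHaar_preimage_linearMap μ hdet, measure_preimage_add_right, abs_inv, hL, inv_one,
    ENNReal.ofReal_one, one_mul]

theorem addHaar_setOf_linearMap_eq {φ : E →ₗ[ℝ] ℝ} (hφ : φ ≠ 0) (c : ℝ) :
    μ {v | φ v = c} = 0 := by
  let H : AffineSubspace ℝ E := (AffineSubspace.mk' c ⊥).comap φ.toAffineMap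
  have hH (v : E) : v ∈ H ↔ φ v = c := by
    simp [H, AffineSubspace.mem_mk', sub_eq_zero]
  have hH_ne_top : H ≠ ⊤ := fun htop => hφ <| LinearMap.ext fun v => by
    have hφ_eq (w : E) : φ w = c := (hH w).1 (htop ▸ AffineSubspace.mem_top ℝ E w)
    rw [hφ_eq v, ← hφ_eq 0, map_zero, LinearMap.zero_apply]
  rw [show {v | φ v = c} = (H : Set E) from Set.ext fun v => (hH v).symm]
  exact Measure.addHaar_affineSubspace μ H hH_ne_top

end AddHaar

theorem exists_le_lt_le_lt {α : Type*} [Field α] [LinearOrder α] [IsStrictOrderedRing α]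
    {a b c d : α} (hac : a ≤ c) (had : a < d) (hbc : b < c) (hbd : b < d) :
    ∃ x, a ≤ x ∧ b < x ∧ x ≤ c ∧ x < d := by
  have h : max a b ≤ min c d := max_le (le_min hac had.le) (le_min hbc.le hbd.le)
  have hb : b < min c d := lt_min hbc hbd
  have hd : max a b < d := max_lt had hbd
  refine ⟨(max a b + min c d) / 2, ?_, ?_, ?_, ?_⟩
  · linarith [le_max_left a b]
  · linarith [le_max_right a b]
  · linarith [min_le_left c d]
  · linarith [min_le_right c d]

section Integration

open MeasureTheory Set

theorem measurableSet_vecCons_mem {n : ℕ} {K : Set (Fin (n + 1) → ℝ)} (hK : MeasurableSet K)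
    (x : ℝ) : MeasurableSet {v | Matrix.vecCons x v ∈ K} :=
  hK.preimage (measurable_pi_lambda _ fun i => by
    cases i using Fin.cases with
    | zero => exact measurable_const
    | succ j => exact measurable_pi_apply j)

theorem volume_eq_lintegral_vecCons {n : ℕ} {K : Set (Fin (n + 1) → ℝ)} (hK : MeasurableSet K) :
    volume K = ∫⁻ x, volume {v | Matrix.vecCons x v ∈ K} := by
  have h := (volume_preserving_piFinSuccAbove (fun _ : Fin (n + 1) => ℝ) 0).symm
  rw [← h.measure_preimage hK.nullMeasurableSet, Measure.volume_eq_prod,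
    Measure.prod_apply (h.measurable hK)]
  have hcons (x : ℝ) (v : Fin n → ℝ) :
      Fin.insertNthEquiv (fun _ : Fin (n + 1) => ℝ) 0 (x, v) = Matrix.vecCons x v :=
    Fin.insertNth_zero' x v
  simp only [preimage, mem_ofPred_eq, MeasurableEquiv.piFinSuccAbove_symm_apply, hcons]

theorem volume_eq_ofReal_integral_vecCons {n : ℕ} {K : Set (Fin (n + 1) → ℝ)}
    (hK : MeasurableSet K) {a b : ℝ} (hab : a ≤ b) (hKab : ∀ v ∈ K, v 0 ∈ Icc a b) {f : ℝ → ℝ}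
    (hf : IntervalIntegrable f volume a b) (hf₀ : ∀ x ∈ Ioo a b, 0 ≤ f x)
    (hKf : ∀ x ∈ Ioo a b, volume {v | Matrix.vecCons x v ∈ K} = ENNReal.ofReal (f x)) :
    volume K = ENNReal.ofReal (∫ x in a..b, f x) := by
  have hsupp : Function.support (fun x => volume {v | Matrix.vecCons x v ∈ K}) ⊆ Icc a b := by
    intro x hx
    obtain ⟨v, hv⟩ := nonempty_of_measure_ne_zero hx
    exact hKab _ hv
  rw [volume_eq_lintegral_vecCons hK, ← setLIntegral_eq_of_support_subset hsupp,
    ← restrict_Ioo_eq_restrict_Icc, setLIntegral_congr_fun measurableSet_Ioo hKf,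
    intervalIntegral.integral_of_le hab, integral_Ioc_eq_integral_Ioo,
    ofReal_integral_eq_lintegral_ofReal]
  · exact ((intervalIntegrable_iff_integrableOn_Ioo_of_le hab).1 hf)
  · exact (ae_restrict_iff' measurableSet_Ioo).2 (.of_forall hf₀)

theorem integral_quartic (c₀ c₁ c₂ c₃ c₄ a b : ℝ) :
    ∫ x in a..b, (c₀ + c₁ * x + c₂ * x ^ 2 + c₃ * x ^ 3 + c₄ * x ^ 4) =
      c₀ * (b - a) + c₁ * ((b ^ 2 - a ^ 2) / 2) + c₂ * ((b ^ 3 - a ^ 3) / 3) +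
        c₃ * ((b ^ 4 - a ^ 4) / 4) + c₄ * ((b ^ 5 - a ^ 5) / 5) := by
  have hi {f : ℝ → ℝ} (hf : Continuous f) := hf.intervalIntegrable (μ := volume) a b
  rw [intervalIntegral.integral_add (hi (by fun_prop)) (hi (by fun_prop)),
    intervalIntegral.integral_add (hi (by fun_prop)) (hi (by fun_prop)),
    intervalIntegral.integral_add (hi (by fun_prop)) (hi (by fun_prop)),
    intervalIntegral.integral_add (hi (by fun_prop)) (hi (by fun_prop))]
  norm_num [intervalIntegral.integral_const_mul, integral_pow, mul_comm (b - a),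
    intervalIntegral.integral_const_mul c₁ fun x => x]

theorem integral_max_zero_sub {a b k : ℝ} (hak : a ≤ k) (hkb : k ≤ b) :
    ∫ x in a..b, max 0 (k - x) = (k - a) ^ 2 / 2 := by
  have hc : Continuous fun x : ℝ => max 0 (k - x) := by fun_prop
  have h₁ : ∫ x in a..k, max 0 (k - x) = ∫ x in a..k, (k - x) :=
    intervalIntegral.integral_congr fun x hx => by
      rw [uIcc_of_le hak] at hx
      exact max_eq_right (sub_nonneg.2 hx.2)
  have h₂ : ∫ x in k..b, max 0 (k - x) = ∫ _ in k..b, (0 : ℝ) :=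
    intervalIntegral.integral_congr fun x hx => by
      rw [uIcc_of_le hkb] at hx
      exact max_eq_left (sub_nonpos.2 hx.1)
  rw [← intervalIntegral.integral_add_adjacent_intervals (hc.intervalIntegrable a k)
    (hc.intervalIntegrable k b), h₁, h₂, intervalIntegral.integral_comp_sub_left (fun x => x) k]
  simp

theorem volume_Ioo_prod_Ioc_inter_lt_add {a b c d e : ℝ} (he : a + c ≤ e) (heb : e ≤ b + c)
    (hed : e ≤ a + d) :
    volume {v : Fin 2 → ℝ | (a < v 0 ∧ v 0 < b) ∧ (c < v 1 ∧ v 1 ≤ d) ∧ e < v 0 + v 1} =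
      ENNReal.ofReal ((b - a) * (d - c) - (e - a - c) ^ 2 / 2) := by
  set K := {v : Fin 2 → ℝ | (a < v 0 ∧ v 0 < b) ∧ (c < v 1 ∧ v 1 ≤ d) ∧ e < v 0 + v 1}
  have hK : MeasurableSet K := by measurability
  have hc : Continuous fun u : ℝ => max 0 (e - c - u) := by fun_prop
  have hlen (u : ℝ) (hu : u ∈ Ioo a b) : max 0 (e - c - u) ≤ d - c :=
    max_le (by linarith) (by linarith [hu.1])
  have hslice (u : ℝ) (hu : u ∈ Ioo a b) : volume {w | Matrix.vecCons u w ∈ K} =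
      ENNReal.ofReal (d - c - max 0 (e - c - u)) := by
    have hIoc : {w | Matrix.vecCons u w ∈ K} =
        MeasurableEquiv.funUnique (Fin 1) ℝ ⁻¹' Ioc (c + max 0 (e - c - u)) d := by
      ext w
      change (_ ∧ (c < w 0 ∧ w 0 ≤ d) ∧ e < u + w 0) ↔ c + max 0 (e - c - u) < w 0 ∧ w 0 ≤ d
      rw [← lt_sub_iff_add_lt', max_lt_iff, sub_pos, sub_right_comm,
        sub_lt_sub_iff_right, sub_lt_iff_lt_add']
      exact ⟨fun h => ⟨⟨h.2.1.1, h.2.2⟩, h.2.1.2⟩, fun h => ⟨hu, ⟨h.1.1, h.2⟩, h.1.2⟩⟩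
    rw [← sub_add_eq_sub_sub, ← Real.volume_Ioc, hIoc]
    exact (volume_preserving_funUnique (Fin 1) ℝ).measure_preimage_equiv _
  rw [volume_eq_ofReal_integral_vecCons hK (by linarith)
    (fun v hv => ⟨hv.1.1.le, hv.1.2.le⟩) (f := fun u => d - c - max 0 (e - c - u))
    ((continuous_const.sub hc).intervalIntegrable a b)
    (fun u hu => sub_nonneg.2 (hlen u hu)) hslice,
    intervalIntegral.integral_sub intervalIntegrable_const (hc.intervalIntegrable a b),
    integral_max_zero_sub (by linarith) (by linarith), intervalIntegral.integral_const, smul_eq_mul,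
    sub_right_comm]

end Integration

namespace Cand

instance : DecidableEq Cand := fun U W => by
  cases U <;> cases W <;> first | exact isTrue rfl | exact isFalse nofun

instance : Fintype Cand := ⟨{A, B, C}, by rintro (_ | _ | _) <;> decide⟩

theorem exists_iff {P : Cand → Prop} : (∃ W, P W) ↔ P A ∨ P B ∨ P C :=
  ⟨by rintro ⟨_ | _ | _, h⟩ <;> tauto, by rintro (h | h | h) <;> exact ⟨_, h⟩⟩

theorem forall_iff {P : Cand → Prop} : (∀ W, P W) ↔ P A ∧ P B ∧ P C :=
  ⟨fun h => ⟨h A, h B, h C⟩, by rintro ⟨hA, hB, hC⟩ (_ | _ | _) <;> assumption⟩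

theorem sum_eq (f : Cand → ℝ) : ∑ W, f W = f A + f B + f C :=
  (add_assoc (f A) (f B) (f C)).symm ▸ by simp [Finset.univ, Fintype.elems]

theorem exists_perm_inv_eq {L R : Cand} (h : L ≠ R) :
    ∃ σ : Equiv.Perm Cand, σ⁻¹ C = L ∧ σ⁻¹ B = R := by
  revert L R
  decide

theorem inv_B_eq_inv_A_of_ne {σ τ : Equiv.Perm Cand} (h : σ ≠ τ) (hC : σ⁻¹ C = τ⁻¹ C) :
    τ⁻¹ B = σ⁻¹ A := by
  revert σ τ
  decide

end Cand

namespace Profile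

/-- `p.ballots a b` is the number of ballots of `p` ranking `a` first and `b` second; it is `0` for
`a = b`. This indexing turns a renaming of the candidates into a reindexing of both arguments. -/
def ballots (p : Profile) : Cand → Cand → ℝ
  | .A, .B => p.x1
  | .A, .C => p.x2
  | .B, .A => p.y1
  | .B, .C => p.y2
  | .C, .A => p.z1
  | .C, .B => p.z2
  | _, _ => 0

theorem ballots_self (p : Profile) (a : Cand) : p.ballots a a = 0 := by cases a <;> rfl

theorem ext_ballots {p q : Profile} (h : ∀ a b, p.ballots a b = q.ballots a b) : p = q := by
  cases p; cases q
  exact Profile.mk.injEq .. ▸ ⟨h .A .B, h .A .C, h .B .A, h .B .C, h .C .A, h .C .B⟩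

theorem ballots_add (p q : Profile) (a b : Cand) :
    (p + q).ballots a b = p.ballots a b + q.ballots a b := by
  cases a <;> cases b <;> first | rfl | exact (add_zero 0).symm

theorem nonneg_iff_ballots {p : Profile} : p.nonneg ↔ ∀ a b, 0 ≤ p.ballots a b := by
  simp only [nonneg, Cand.forall_iff, ballots, le_refl, true_and, and_true, and_assoc]

theorem fp_eq_sum_ballots (W : Cand) (p : Profile) : fp W p = ∑ U, p.ballots W U := by
  cases W <;> simp [fp, X, Y, Z, ballots, Cand.sum_eq]

theorem V_eq_sum_fp (p : Profile) : p.V = ∑ W, fp W p := (Cand.sum_eq fun W => fp W p).symm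

/-- Renaming of candidates: candidate `σ W` plays in `σ • p` the role of `W` in `p`. -/
instance : SMul (Equiv.Perm Cand) Profile where
  smul σ p :=
    let n (a b : Cand) := p.ballots (σ⁻¹ a) (σ⁻¹ b)
    ⟨n .A .B, n .A .C, n .B .A, n .B .C, n .C .A, n .C .B⟩

theorem ballots_smul (σ : Equiv.Perm Cand) (p : Profile) (a b : Cand) :
    (σ • p).ballots a b = p.ballots (σ⁻¹ a) (σ⁻¹ b) := by
  cases a <;> cases b <;> first | rfl | exact (ballots_self p _).symm

instance : MulAction (Equiv.Perm Cand) Profile where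
  one_smul _ := ext_ballots fun _ _ => ballots_smul ..
  mul_smul σ τ p := ext_ballots fun a b => by
    simp only [ballots_smul, mul_inv_rev, Equiv.Perm.mul_apply]

theorem smul_add (σ : Equiv.Perm Cand) (p q : Profile) : σ • (p + q) = σ • p + σ • q :=
  ext_ballots fun a b => by simp only [ballots_smul, ballots_add]

theorem nonneg.smul {p : Profile} (hp : p.nonneg) (σ : Equiv.Perm Cand) : (σ • p).nonneg :=
  nonneg_iff_ballots.2 fun a b => ballots_smul σ p a b ▸ nonneg_iff_ballots.1 hp _ _

theorem nonneg_smul_iff {σ : Equiv.Perm Cand} {p : Profile} : (σ • p).nonneg ↔ p.nonneg :=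
  ⟨fun h => inv_smul_smul σ p ▸ h.smul σ⁻¹, fun h => h.smul σ⟩

theorem fp_smul (σ : Equiv.Perm Cand) (W : Cand) (p : Profile) :
    fp W (σ • p) = fp (σ⁻¹ W) p := by
  simp only [fp_eq_sum_ballots, ballots_smul]
  exact Equiv.sum_comp σ⁻¹ _

theorem V_smul (σ : Equiv.Perm Cand) (p : Profile) : (σ • p).V = p.V := by
  simp only [V_eq_sum_fp, fp_smul]
  exact Equiv.sum_comp σ⁻¹ fun W => fp W p

/-- `W` wins the final round against `U` after the elimination of `L`. The inequalities force the
three candidates to be distinct. -/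
def WinsRunoff (L U W : Cand) (p : Profile) : Prop :=
  fp L p < fp U p ∧ fp L p < fp W p ∧ fp U p + p.ballots L U < fp W p + p.ballots L W

theorem wins_iff_majority_or_winsRunoff {W : Cand} {p : Profile} :
    wins W p ↔ p.V < 2 * fp W p ∨ ∃ L U, WinsRunoff L U W p := by
  have hV : p.V = p.X + p.Y + p.Z := rfl
  cases W <;> simp only [wins, WinsRunoff, Cand.exists_iff, fp, ballots, hV, lt_irrefl, gt_iff_lt,
    false_and, and_false, false_or, or_false]
  · grind
  · grind
  · grind

theorem winsRunoff_smul {σ : Equiv.Perm Cand} {L U W : Cand} {p : Profile} :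
    WinsRunoff L U W (σ • p) ↔ WinsRunoff (σ⁻¹ L) (σ⁻¹ U) (σ⁻¹ W) p := by
  simp only [WinsRunoff, fp_smul, ballots_smul]

theorem wins_smul {σ : Equiv.Perm Cand} {W : Cand} {p : Profile} :
    wins W (σ • p) ↔ wins (σ⁻¹ W) p := by
  rw [wins_iff_majority_or_winsRunoff, wins_iff_majority_or_winsRunoff, V_smul, fp_smul]
  simp only [winsRunoff_smul]
  exact or_congr_right
    ((σ⁻¹).surjective.exists₂ (p := fun L U => WinsRunoff L U (σ⁻¹ W) p)).symm

theorem strictlySmallest_smul {σ : Equiv.Perm Cand} {W : Cand} {p : Profile} :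
    strictlySmallest W (σ • p) ↔ strictlySmallest (σ⁻¹ W) p := by
  refine Iff.trans ?_ (σ⁻¹).surjective.forall.symm
  simp only [strictlySmallest, fp_smul, (σ⁻¹).injective.ne_iff]

theorem paradox_apply_smul {W : Cand} {p : Profile} (h : paradox W p) (σ : Equiv.Perm Cand) :
    paradox (σ W) (σ • p) := by
  obtain ⟨q, r, hq, hr, rfl, hWq, hWr, hW⟩ := h
  refine ⟨σ • q, σ • r, hq.smul σ, hr.smul σ, (smul_add σ q r).symm, ?_⟩
  simpa only [wins_smul, Equiv.Perm.inv_def, σ.symm_apply_apply] using ⟨hWq, hWr, hW⟩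

theorem paradox_smul {σ : Equiv.Perm Cand} {W : Cand} {p : Profile} :
    paradox W (σ • p) ↔ paradox (σ⁻¹ W) p :=
  ⟨fun h => inv_smul_smul σ p ▸ paradox_apply_smul h σ⁻¹,
    fun h => σ.apply_symm_apply W ▸ paradox_apply_smul h σ⟩

theorem strictlySmallest_C_iff {p : Profile} : strictlySmallest .C p ↔ p.Z < p.X ∧ p.Z < p.Y := by
  simp [strictlySmallest, Cand.forall_iff, fp]

theorem eq_of_strictlySmallest {U W : Cand} {p : Profile} (hU : strictlySmallest U p)
    (hW : strictlySmallest W p) : U = W :=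
  by_contra fun h => lt_asymm (hU W (Ne.symm h)) (hW U h)

theorem add_def (p q : Profile) : p + q =
    ⟨p.x1 + q.x1, p.x2 + q.x2, p.y1 + q.y1, p.y2 + q.y2, p.z1 + q.z1, p.z2 + q.z2⟩ := rfl

/-- Together with nonnegativity, these inequalities cut out the convex hull of the nonconvex set of
nonnegative profiles in which `C` wins. -/
def CWinHull (p : Profile) : Prop :=
  p.Y - p.Z < p.x2 ∧ p.X - p.Z < p.y2 ∧ p.X + p.Y < 3 * p.Z ∧ p.X + p.Y - p.Z < 2 * (p.x2 + p.y2)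

theorem CWinHull.add {p q : Profile} (hp : CWinHull p) (hq : CWinHull q) : CWinHull (p + q) := by
  obtain ⟨hp₁, hp₂, hp₃, hp₄⟩ := hp
  obtain ⟨hq₁, hq₂, hq₃, hq₄⟩ := hq
  simp only [CWinHull, add_def, X, Y, Z] at *
  refine ⟨?_, ?_, ?_, ?_⟩ <;> linarith

theorem cWinHull_of_wins {p : Profile} (hp : p.nonneg) (h : wins .C p) : CWinHull p := by
  obtain ⟨hx1, hx2, hy1, hy2, -, -⟩ := hp
  simp only [wins, CWinHull, X, Y, Z] at h ⊢
  rcases h with h | ⟨h₁, -, h₂⟩ | ⟨h₁, -, h₂⟩ <;> refine ⟨?_, ?_, ?_, ?_⟩ <;> linarith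

-- `C` beats `B` after the elimination of `A` in the part made up of `a` ballots A≻C≻B, all ballots
-- of `B` but `b` ballots B≻C≻A, and `ζ` ballots of `C`; in the rest it beats `A` after the
-- elimination of `B`.
theorem CWinHull.exists_runoff_split {p : Profile} (hp : p.nonneg) (hZ : p.Z ≤ p.X + p.Y)
    (h : CWinHull p) : ∃ a b ζ, (0 ≤ a ∧ a ≤ p.x2) ∧ (0 ≤ b ∧ b ≤ p.y2) ∧
      (a < p.Y - b ∧ a < ζ ∧ p.Y - b < ζ + a) ∧
      (b < p.X - a ∧ b < p.Z - ζ ∧ p.X - a < p.Z - ζ + b) := by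
  obtain ⟨h₁, h₂, h₃, h₄⟩ := h
  have hX : p.x2 ≤ p.X := le_add_of_nonneg_left hp.1
  have hY : p.y2 ≤ p.Y := le_add_of_nonneg_left hp.2.2.1
  have hx := hp.2.1
  have hy := hp.2.2.2.1
  -- The sum `s = a + b` is chosen first.
  obtain ⟨s, hs, hs'⟩ : ∃ s, (p.X + p.Y - p.Z) / 2 < s ∧
      s < min (min p.X p.Y) (min p.Z (p.x2 + p.y2)) := exists_between <| by
    simp only [lt_min_iff]
    refine ⟨⟨?_, ?_⟩, ?_, ?_⟩ <;> linarith
  simp only [lt_min_iff] at hs'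
  obtain ⟨⟨hsX, hsY⟩, hsZ, hs₃⟩ := hs'
  obtain ⟨a, ha, haY, ha', haX⟩ := exists_le_lt_le_lt (a := max 0 (s - p.y2)) (b := p.Y - p.Z)
    (c := min p.x2 s) (d := s - p.X + p.Z) (by
      simp only [max_le_iff, le_min_iff]
      refine ⟨⟨?_, ?_⟩, ?_, ?_⟩ <;> linarith) (max_lt (by linarith) (by linarith))
    (lt_min h₁ (by linarith)) (by linarith)
  simp only [max_le_iff, le_min_iff] at ha ha'
  obtain ⟨ζ, hζ, hζ'⟩ : ∃ ζ, max a (p.Y - s) < ζ ∧ ζ < min (p.Z - (s - a)) (p.Z - p.X + s) :=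
    exists_between <| by
      simp only [max_lt_iff, lt_min_iff]
      refine ⟨⟨?_, ?_⟩, ?_, ?_⟩ <;> linarith
  simp only [max_lt_iff, lt_min_iff] at hζ hζ'
  refine ⟨a, s - a, ζ, ⟨ha.1, ha'.1⟩, ⟨?_, ?_⟩, ⟨?_, hζ.1, ?_⟩, ?_, ?_, ?_⟩ <;> linarith

theorem CWinHull.exists_add_eq {p : Profile} (hp : p.nonneg) (hZ : p.Z ≤ p.X + p.Y)
    (h : CWinHull p) :
    ∃ q r : Profile, q.nonneg ∧ r.nonneg ∧ q + r = p ∧ wins .C q ∧ wins .C r := by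
  obtain ⟨a, b, ζ, ⟨ha, ha'⟩, ⟨hb, hb'⟩, ⟨hA₁, hA₂, hA₃⟩, hB₁, hB₂, hB₃⟩ :=
    h.exists_runoff_split hp hZ
  obtain ⟨hx1, -, hy1, -, hz1, hz2⟩ := hp
  obtain ⟨e, he, he', heζ, heZ⟩ : ∃ e, 0 ≤ e ∧ e ≤ p.z1 ∧ e ≤ ζ ∧ ζ - e ≤ p.z2 := by
    rcases le_total ζ p.z1 with hζ | hζ
    · exact ⟨ζ, by linarith, hζ, le_rfl, by linarith⟩
    · exact ⟨p.z1, hz1, le_rfl, hζ, by simp only [Z] at *; linarith⟩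
  refine ⟨⟨0, a, p.y1, p.y2 - b, e, ζ - e⟩, ⟨p.x1, p.x2 - a, 0, b, p.z1 - e, p.z2 - (ζ - e)⟩,
    ⟨le_rfl, ha, hy1, sub_nonneg.2 hb', he, sub_nonneg.2 heζ⟩,
    ⟨hx1, sub_nonneg.2 ha', le_rfl, hb, sub_nonneg.2 he', sub_nonneg.2 heZ⟩, ?_, ?_, ?_⟩
  · simp only [add_def, zero_add, add_zero, add_sub_cancel, sub_add_cancel]
  · refine .inr (.inl ?_)
    simp only [X, Y, Z] at *
    refine ⟨?_, ?_, ?_⟩ <;> linarith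
  · refine .inr (.inr ?_)
    simp only [X, Y, Z] at *
    refine ⟨?_, ?_, ?_⟩ <;> linarith

theorem paradox_C_iff {p : Profile} (hp : p.nonneg) :
    paradox .C p ↔ CWinHull p ∧ ¬ wins .C p := by
  constructor
  · rintro ⟨q, r, hq, hr, rfl, hWq, hWr, hW⟩
    exact ⟨(cWinHull_of_wins hq hWq).add (cWinHull_of_wins hr hWr), hW⟩
  · rintro ⟨h, hW⟩
    obtain ⟨q, r, hq, hr, hqr, hWq, hWr⟩ := h.exists_add_eq hp (not_lt.1 fun hZ => hW (.inl hZ))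
    exact ⟨q, r, hq, hr, hqr, hWq, hWr, hW⟩

theorem paradox_inv_apply_C_iff {σ : Equiv.Perm Cand} {p : Profile} (hp : p.nonneg) :
    paradox (σ⁻¹ .C) p ↔ CWinHull (σ • p) ∧ ¬ wins (σ⁻¹ .C) p := by
  rw [← paradox_smul, paradox_C_iff (hp.smul σ), wins_smul]

theorem swap_B_C_smul (p : Profile) :
    Equiv.swap Cand.B .C • p = ⟨p.x2, p.x1, p.z1, p.z2, p.y1, p.y2⟩ := rfl

/-- `C` is the plurality loser, and both `C` and the non-loser `B` show a reinforcement paradox.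
Up to renaming the candidates, this is the double paradox. -/
def DoubleParadox (p : Profile) : Prop :=
  p.nonneg ∧ strictlySmallest .C p ∧ paradox .C p ∧ paradox .B p

theorem doubleParadox_iff {p : Profile} : DoubleParadox p ↔
    p.nonneg ∧ (p.Z < p.X ∧ p.Z < p.Y) ∧ CWinHull p ∧
      (p.X - p.Y < p.z2 ∧ p.X + p.Z - p.Y < 2 * (p.x1 + p.z2)) ∧
      p.Y + p.z2 ≤ p.X + p.z1 := by
  rw [DoubleParadox, strictlySmallest_C_iff]
  refine and_congr_right fun hp => and_congr_right fun hZ => ?_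
  have hB := paradox_inv_apply_C_iff (σ := Equiv.swap .B .C) hp
  rw [Equiv.swap_inv, Equiv.swap_apply_right, swap_B_C_smul] at hB
  rw [paradox_C_iff hp, hB]
  obtain ⟨hx1, -, hy1, hy2, -, -⟩ := hp
  obtain ⟨hZX, hZY⟩ := hZ
  -- As `C` is the plurality loser, it does not win, and two of the four hull inequalities for `B`
  -- are automatic; `B` wins exactly when it beats `A` in the final round.
  simp only [CWinHull, wins, X, Y, Z] at *
  grind

theorem exists_smul_doubleParadox_iff {p : Profile} :
    (∃ σ : Equiv.Perm Cand, DoubleParadox (σ • p)) ↔ p.nonneg ∧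
      (∃ W, ¬ strictlySmallest W p ∧ paradox W p) ∧ ∃ W, strictlySmallest W p ∧ paradox W p := by
  simp only [DoubleParadox, nonneg_smul_iff, strictlySmallest_smul, paradox_smul]
  constructor
  · rintro ⟨σ, hp, hL, hPL, hPW⟩
    refine ⟨hp, ⟨σ⁻¹ .B, fun hW => ?_, hPW⟩, σ⁻¹ .C, hL, hPL⟩
    exact Cand.noConfusion (σ⁻¹.injective (eq_of_strictlySmallest hW hL))
  · rintro ⟨hp, ⟨W, hW, hPW⟩, L, hL, hPL⟩
    obtain ⟨σ, rfl, rfl⟩ := Cand.exists_perm_inv_eq (L := L) (R := W) (by rintro rfl; exact hW hL)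
    exact ⟨σ, hp, hL, hPL, hPW⟩

theorem DoubleParadox.final_tie {p : Profile} (h : DoubleParadox p) (hA : paradox .A p) :
    p.X + p.z1 = p.Y + p.z2 := by
  obtain ⟨-, hZ, -, -, -, -, -, -, -, -, hB⟩ := h
  obtain ⟨-, -, -, -, -, -, -, hA⟩ := hA
  rw [strictlySmallest_C_iff] at hZ
  simp only [wins] at hA hB
  exact le_antisymm (not_lt.1 fun h => hA (.inr (.inl ⟨hZ.1, hZ.2, h⟩)))
    (not_lt.1 fun h => hB (.inr (.inl ⟨hZ.2, hZ.1, h⟩)))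

theorem final_tie_of_ne {σ τ : Equiv.Perm Cand} (hστ : σ ≠ τ) {p : Profile}
    (hσ : DoubleParadox (σ • p)) (hτ : DoubleParadox (τ • p)) :
    (σ • p).X + (σ • p).z1 = (σ • p).Y + (σ • p).z2 := by
  have hC : σ⁻¹ .C = τ⁻¹ .C :=
    eq_of_strictlySmallest (strictlySmallest_smul.1 hσ.2.1) (strictlySmallest_smul.1 hτ.2.1)
  refine hσ.final_tie (paradox_smul.2 ?_)
  exact Cand.inv_B_eq_inv_A_of_ne hστ hC ▸ paradox_smul.1 hτ.2.2.2

/-- The profile with total `t` and first five entries `v`, so that `withTotal 1 = profOf`. Unlike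
`profOf` it is linear, jointly in `t` and `v`. -/
def withTotal (t : ℝ) (v : Fin 5 → ℝ) : Profile :=
  ⟨v 0, v 1, v 2, v 3, v 4, t - (v 0 + v 1 + v 2 + v 3 + v 4)⟩

/-- The coordinates of a profile in the simplex `T`. -/
def coords (p : Profile) : Fin 5 → ℝ := ![p.x1, p.x2, p.y1, p.y2, p.z1]

theorem coords_add (p q : Profile) : coords (p + q) = coords p + coords q := by
  simp only [coords, add_def, Matrix.add_cons, Matrix.head_cons, Matrix.tail_cons,
    Matrix.empty_add_empty]

theorem coords_withTotal (t : ℝ) (v : Fin 5 → ℝ) : coords (withTotal t v) = v := by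
  ext i
  fin_cases i <;> rfl

theorem withTotal_coords (p : Profile) : withTotal p.V (coords p) = p := by
  refine (Profile.mk.injEq ..).mpr ⟨rfl, rfl, rfl, rfl, rfl, ?_⟩
  change p.X + p.Y + p.Z - (p.x1 + p.x2 + p.y1 + p.y2 + p.z1) = p.z2
  simp only [X, Y, Z]
  ring

theorem V_withTotal (t : ℝ) (v : Fin 5 → ℝ) : (withTotal t v).V = t := by
  simp only [V, X, Y, Z, withTotal]
  ring

theorem withTotal_add (s t : ℝ) (v w : Fin 5 → ℝ) :
    withTotal (s + t) (v + w) = withTotal s v + withTotal t w := by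
  simp only [withTotal, add_def, Pi.add_apply, mk.injEq, true_and]
  ring

theorem withTotal_coords_smul (σ : Equiv.Perm Cand) (t : ℝ) (v : Fin 5 → ℝ) :
    withTotal t (coords (σ • withTotal t v)) = σ • withTotal t v := by
  nth_rw 1 [← V_withTotal t v, ← V_smul σ, withTotal_coords]

theorem ballots_withTotal_zero_smul (r : ℝ) (v : Fin 5 → ℝ) (a b : Cand) :
    (withTotal 0 (r • v)).ballots a b = r * (withTotal 0 v).ballots a b := by
  cases a <;> cases b <;> simp only [withTotal, ballots, Pi.smul_apply, smul_eq_mul] <;> ring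

/-- The linear part of the action of the candidate renamings on the hyperplane of total-one
profiles. -/
def relabel : Equiv.Perm Cand →* Module.End ℝ (Fin 5 → ℝ) where
  toFun σ :=
    { toFun := fun v => coords (σ • withTotal 0 v)
      map_add' := fun v w => by
        rw [← coords_add, ← smul_add, ← withTotal_add, add_zero]
      map_smul' := fun r v => by
        ext i
        fin_cases i <;> exact ballots_withTotal_zero_smul r v _ _ }
  map_one' := LinearMap.ext fun v => by
    change coords ((1 : Equiv.Perm Cand) • withTotal 0 v) = v
    rw [one_smul, coords_withTotal]
  map_mul' σ τ := LinearMap.ext fun v => by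
    change coords ((σ * τ) • withTotal 0 v) =
      coords (σ • withTotal 0 (coords (τ • withTotal 0 v)))
    rw [withTotal_coords_smul, mul_smul]

theorem abs_det_relabel (σ : Equiv.Perm Cand) : |LinearMap.det (relabel σ)| = 1 :=
  ((LinearMap.det.comp relabel).isOfFinOrder (isOfFinOrder_of_finite σ)).norm_eq_one

theorem profOf_relabel_add (σ : Equiv.Perm Cand) (v : Fin 5 → ℝ) :
    profOf (relabel σ v + coords (σ • withTotal 1 0)) = σ • profOf v := by
  change withTotal 1 (coords (σ • withTotal 0 v) + _) = σ • withTotal 1 v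
  have hadd := withTotal_add 0 1
  rw [zero_add] at hadd
  rw [hadd, withTotal_coords_smul, withTotal_coords_smul, ← smul_add, ← hadd, add_zero]

open MeasureTheory in
theorem volume_profOf_smul (σ : Equiv.Perm Cand) (S : Set Profile) :
    volume {v | σ • profOf v ∈ S} = volume {v | profOf v ∈ S} := by
  simp only [← profOf_relabel_add]
  exact addHaar_preimage_linearMap_add volume (abs_det_relabel σ) _ {v | profOf v ∈ S}

theorem measurableSet_profOf_smul {S : Set Profile} (hS : MeasurableSet {v | profOf v ∈ S})
    (σ : Equiv.Perm Cand) : MeasurableSet {v | σ • profOf v ∈ S} := by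
  simp only [← profOf_relabel_add]
  exact hS.preimage
    ((relabel σ).continuous_of_finiteDimensional.add continuous_const).measurable

theorem mem_T_iff {v : Fin 5 → ℝ} : v ∈ T ↔ (profOf v).nonneg := by
  simp [T, profOf, nonneg, Fin.forall_fin_succ, and_assoc]

end Profile

section Cell

open MeasureTheory Set Matrix

/-- The total-one profiles in which `C` is the plurality loser and both `B` and `C` show a
reinforcement paradox, in the coordinates `Z, X, Z2, X2, Y2`. -/
def doubleParadoxCell : Set (Fin 5 → ℝ) :=
  {v | (1 / 4 < v 0 ∧ v 0 < v 1 ∧ v 1 < 1 - 2 * v 0) ∧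
    (0 ≤ v 2 ∧ 2 * v 1 + v 0 - 1 < v 2 ∧ v 2 ≤ v 1 + v 0 - 1 / 2) ∧
    (1 - v 1 - 2 * v 0 < v 3 ∧ v 3 < 1 / 2 - v 0 + v 2) ∧
    (v 1 - v 0 < v 4 ∧ v 4 ≤ 1 - v 1 - v 0) ∧ 1 / 2 - v 0 < v 3 + v 4}

theorem measurableSet_doubleParadoxCell : MeasurableSet doubleParadoxCell := by
  unfold doubleParadoxCell
  measurability

variable {z x t : ℝ}

theorem volume_doubleParadoxCell_slice₃ (hz : 1 / 4 < z) (hzx : z < x) (hx : x < 1 - 2 * z)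
    (ht : max 0 (2 * x + z - 1) < t) (htz : t < x + z - 1 / 2) :
    volume {v : Fin 2 → ℝ | vecCons z (vecCons x (vecCons t v)) ∈ doubleParadoxCell} =
      ENNReal.ofReal ((x + z - 1 / 2 + t) * (1 - 2 * x) - (2 * z - 1 / 2) ^ 2 / 2) := by
  obtain ⟨ht₀, ht₁⟩ := max_lt_iff.1 ht
  have hslice : {v : Fin 2 → ℝ | vecCons z (vecCons x (vecCons t v)) ∈ doubleParadoxCell} =
      {v | (1 - x - 2 * z < v 0 ∧ v 0 < 1 / 2 - z + t) ∧ (x - z < v 1 ∧ v 1 ≤ 1 - x - z) ∧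
        1 / 2 - z < v 0 + v 1} := by
    ext v
    exact (and_iff_right ⟨hz, hzx, hx⟩).trans (and_iff_right ⟨ht₀.le, ht₁, htz.le⟩)
  rw [hslice, volume_Ioo_prod_Ioc_inter_lt_add (by linarith) (by linarith) (by linarith)]
  ring_nf

/-- The volume of the slice of `doubleParadoxCell` at `Z = z` and `X = x`. -/
noncomputable def sliceVolume (z x : ℝ) : ℝ :=
  ∫ t in max 0 (2 * x + z - 1)..x + z - 1 / 2,
    ((x + z - 1 / 2 + t) * (1 - 2 * x) - (2 * z - 1 / 2) ^ 2 / 2)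

theorem volume_doubleParadoxCell_slice₂ (hz : 1 / 4 < z) (hzx : z < x) (hx : x < 1 - 2 * z) :
    volume {v : Fin 3 → ℝ | vecCons z (vecCons x v) ∈ doubleParadoxCell} =
      ENNReal.ofReal (sliceVolume z x) := by
  refine volume_eq_ofReal_integral_vecCons
    (measurableSet_vecCons_mem (measurableSet_vecCons_mem measurableSet_doubleParadoxCell z) x)
    (max_le (by linarith) (by linarith))
    (fun v hv => ⟨max_le hv.2.1.1 hv.2.1.2.1.le, hv.2.1.2.2⟩)
    (Continuous.intervalIntegrable (by fun_prop) _ _) (fun t ht => ?_)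
    (fun t ht => volume_doubleParadoxCell_slice₃ hz hzx hx ht.1 ht.2)
  have ht₀ : 0 < t := (le_max_left _ _).trans_lt ht.1
  nlinarith

theorem sliceVolume_eq (z x : ℝ) : sliceVolume z x =
    (1 - 2 * x) * ((2 * (x + z - 1 / 2)) ^ 2 -
      (x + z - 1 / 2 + max 0 (2 * x + z - 1)) ^ 2) / 2 -
    (x + z - 1 / 2 - max 0 (2 * x + z - 1)) * (2 * z - 1 / 2) ^ 2 / 2 := by
  have h (t : ℝ) : (x + z - 1 / 2 + t) * (1 - 2 * x) - (2 * z - 1 / 2) ^ 2 / 2 =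
    (x + z - 1 / 2) * (1 - 2 * x) - (2 * z - 1 / 2) ^ 2 / 2 + t * (1 - 2 * x) := by ring
  simp only [sliceVolume, h]
  rw [intervalIntegral.integral_add intervalIntegrable_const
    (Continuous.intervalIntegrable (by fun_prop) _ _), intervalIntegral.integral_const,
    intervalIntegral.integral_mul_const, integral_id, smul_eq_mul]
  ring

theorem continuous_sliceVolume (z : ℝ) : Continuous (sliceVolume z) := by
  simp only [funext (sliceVolume_eq z)]
  fun_prop

theorem sliceVolume_nonneg (hz : 1 / 4 ≤ z) (hzx : z ≤ x) (hx : x ≤ 1 - 2 * z) :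
    0 ≤ sliceVolume z x := by
  refine intervalIntegral.integral_nonneg (max_le (by linarith) (by linarith)) fun t ht => ?_
  have ht₀ : 0 ≤ t := (le_max_left _ _).trans ht.1
  nlinarith

theorem sliceVolume_eq_of_le (hx : x ≤ (1 - z) / 2) : sliceVolume z x =
    -(2 * z - 1 / 2) ^ 2 / 2 * (x + (z - 1 / 2)) + 3 * z * (x + (z - 1 / 2)) ^ 2 +
      -3 * (x + (z - 1 / 2)) ^ 3 := by
  rw [sliceVolume_eq, max_eq_left (by linarith)]
  ring

theorem sliceVolume_eq_of_ge (hx : (1 - z) / 2 ≤ x) : sliceVolume z x =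
    -(2 * z - 1 / 2) ^ 2 / 2 * (1 / 2 - x) + 4 * z * (1 / 2 - x) ^ 2 + -5 * (1 / 2 - x) ^ 3 := by
  rw [sliceVolume_eq, max_eq_right (by linarith)]
  ring

theorem integral_sliceVolume (hz : z ≤ 1 / 3) : ∫ x in z..1 - 2 * z, sliceVolume z x =
    5 / 32 + -53 / 24 * z + 367 / 32 * z ^ 2 + -103 / 4 * z ^ 3 + 21 * z ^ 4 := by
  have hi (a b : ℝ) := (continuous_sliceVolume z).intervalIntegrable (μ := volume) a b
  have hcubic (c₁ c₂ c₃ a b : ℝ) := by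
    simpa only [zero_add, zero_mul, add_zero] using integral_quartic 0 c₁ c₂ c₃ 0 a b
  have hleft : ∫ x in z..(1 - z) / 2, sliceVolume z x = ∫ s in 2 * z - 1 / 2..z / 2,
      (-(2 * z - 1 / 2) ^ 2 / 2 * s + 3 * z * s ^ 2 + -3 * s ^ 3) := by
    rw [intervalIntegral.integral_congr fun x hx => ?_, intervalIntegral.integral_comp_add_right
      (fun s => -(2 * z - 1 / 2) ^ 2 / 2 * s + 3 * z * s ^ 2 + -3 * s ^ 3) (z - 1 / 2)]
    · congr 1 <;> ring
    · rw [uIcc_of_le (by linarith)] at hx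
      exact sliceVolume_eq_of_le hx.2
  have hright : ∫ x in (1 - z) / 2..1 - 2 * z, sliceVolume z x = ∫ s in 2 * z - 1 / 2..z / 2,
      (-(2 * z - 1 / 2) ^ 2 / 2 * s + 4 * z * s ^ 2 + -5 * s ^ 3) := by
    rw [intervalIntegral.integral_congr fun x hx => ?_, intervalIntegral.integral_comp_sub_left
      (fun s => -(2 * z - 1 / 2) ^ 2 / 2 * s + 4 * z * s ^ 2 + -5 * s ^ 3) (1 / 2)]
    · congr 1 <;> ring
    · rw [uIcc_of_le (by linarith)] at hx
      exact sliceVolume_eq_of_ge hx.1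
  rw [← intervalIntegral.integral_add_adjacent_intervals (hi z ((1 - z) / 2)) (hi _ _), hleft,
    hright, hcubic, hcubic]
  ring

theorem volume_doubleParadoxCell_slice₁ (hz : 1 / 4 < z) (hz' : z < 1 / 3) :
    volume {v : Fin 4 → ℝ | vecCons z v ∈ doubleParadoxCell} =
      ENNReal.ofReal (∫ x in z..1 - 2 * z, sliceVolume z x) :=
  volume_eq_ofReal_integral_vecCons
    (measurableSet_vecCons_mem measurableSet_doubleParadoxCell z) (by linarith)
    (fun _ hv => ⟨hv.1.2.1.le, hv.1.2.2.le⟩) ((continuous_sliceVolume z).intervalIntegrable _ _)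
    (fun _ hx => sliceVolume_nonneg hz.le hx.1.le hx.2.le)
    (fun _ hx => volume_doubleParadoxCell_slice₂ hz hx.1 hx.2)

theorem integral_integral_sliceVolume :
    ∫ z in (1 / 4 : ℝ)..1 / 3, ∫ x in z..1 - 2 * z, sliceVolume z x = 31 / 552960 := by
  rw [intervalIntegral.integral_congr fun z hz => integral_sliceVolume
    (uIcc_of_le (by norm_num : (1 / 4 : ℝ) ≤ 1 / 3) ▸ hz).2, integral_quartic]
  norm_num

theorem volume_doubleParadoxCell :
    volume doubleParadoxCell = ENNReal.ofReal (31 / 552960) := by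
  have hcont : ContinuousOn (fun z => ∫ x in z..1 - 2 * z, sliceVolume z x)
      (uIcc (1 / 4) (1 / 3)) := by
    rw [uIcc_of_le (by norm_num)]
    exact ContinuousOn.congr (by fun_prop) fun z hz => integral_sliceVolume hz.2
  rw [volume_eq_ofReal_integral_vecCons measurableSet_doubleParadoxCell (by norm_num)
    (fun v hv => ⟨hv.1.1.le, by linarith [hv.1.2.1, hv.1.2.2]⟩) hcont.intervalIntegrable
    (fun z hz => ?_) fun z hz => volume_doubleParadoxCell_slice₁ hz.1 hz.2,
    integral_integral_sliceVolume]
  exact intervalIntegral.integral_nonneg (by linarith [hz.2]) fun x hx =>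
    sliceVolume_nonneg hz.1.le hx.1 hx.2

end Cell

section Chart

open MeasureTheory Matrix Profile

/-- The linear part of the chart carrying the profiles with `DoubleParadox` to
`doubleParadoxCell`. -/
def cellMatrix : Matrix (Fin 5) (Fin 5) ℝ :=
  !![-1, -1, -1, -1, 0; 1, 1, 0, 0, 0; -1, -1, -1, -1, -1; 0, 1, 0, 0, 0; 0, 0, 0, 1, 0]

theorem abs_det_toLin'_cellMatrix : |LinearMap.det (toLin' cellMatrix)| = 1 := by
  rw [LinearMap.det_toLin']
  simp [cellMatrix, Matrix.det_succ_row_zero, Fin.sum_univ_succ, Fin.succAbove]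

theorem toLin'_cellMatrix_add (v : Fin 5 → ℝ) :
    toLin' cellMatrix v + ![1, 0, 1, 0, 0] =
      ![(profOf v).Z, (profOf v).X, (profOf v).z2, (profOf v).x2, (profOf v).y2] := by
  ext i
  fin_cases i <;>
    simp [cellMatrix, profOf, Z, X, dotProduct, Fin.sum_univ_succ] <;> ring

theorem doubleParadox_profOf_iff {v : Fin 5 → ℝ} : DoubleParadox (profOf v) ↔
    toLin' cellMatrix v + ![1, 0, 1, 0, 0] ∈ doubleParadoxCell := by
  have hV : (profOf v).X + (profOf v).Y + (profOf v).Z = 1 := V_withTotal 1 v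
  rw [toLin'_cellMatrix_add, doubleParadox_iff]
  generalize profOf v = p at hV ⊢
  change _ ↔ (1 / 4 < p.Z ∧ p.Z < p.X ∧ p.X < 1 - 2 * p.Z) ∧
    (0 ≤ p.z2 ∧ 2 * p.X + p.Z - 1 < p.z2 ∧ p.z2 ≤ p.X + p.Z - 1 / 2) ∧
    (1 - p.X - 2 * p.Z < p.x2 ∧ p.x2 < 1 / 2 - p.Z + p.z2) ∧
    (p.X - p.Z < p.y2 ∧ p.y2 ≤ 1 - p.X - p.Z) ∧ 1 / 2 - p.Z < p.x2 + p.y2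
  simp only [nonneg, CWinHull, X, Y, Z] at *
  constructor
  · rintro ⟨⟨-, -, hy1, -, -, hz2⟩, ⟨hZX, hZY⟩, ⟨hC₁, hC₂, hC₃, hC₄⟩, ⟨hB₁, hB₂⟩, hB₃⟩
    refine ⟨⟨?_, ?_, ?_⟩, ⟨?_, ?_, ?_⟩, ⟨?_, ?_⟩, ⟨?_, ?_⟩, ?_⟩ <;> linarith
  · rintro ⟨⟨hZ, hZX, hX⟩, ⟨hz2, hz2', hz2''⟩, ⟨hx2, hx2'⟩, ⟨hy2, hy2'⟩, hxy⟩
    refine ⟨⟨?_, ?_, ?_, ?_, ?_, ?_⟩, ⟨?_, ?_⟩, ⟨?_, ?_, ?_, ?_⟩, ⟨?_, ?_⟩, ?_⟩ <;> linarith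

theorem measurableSet_doubleParadox_profOf : MeasurableSet {v | DoubleParadox (profOf v)} := by
  simp only [doubleParadox_profOf_iff]
  exact measurableSet_doubleParadoxCell.preimage
    ((toLin' cellMatrix).continuous_of_finiteDimensional.add continuous_const).measurable

theorem volume_doubleParadox_profOf :
    volume {v | DoubleParadox (profOf v)} = ENNReal.ofReal (31 / 552960) := by
  simp only [doubleParadox_profOf_iff]
  exact (addHaar_preimage_linearMap_add volume abs_det_toLin'_cellMatrix _ _).trans
    volume_doubleParadoxCell

theorem volume_final_tie_profOf :
    volume {v | (profOf v).X + (profOf v).z1 = (profOf v).Y + (profOf v).z2} = 0 := by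
  let φ : (Fin 5 → ℝ) →ₗ[ℝ] ℝ := .proj 0 + .proj 1 + .proj 4
  have hφ : φ ≠ 0 := fun h => one_ne_zero (α := ℝ) <| by
    simpa [φ] using LinearMap.congr_fun h (Pi.single 0 1)
  rw [← addHaar_setOf_linearMap_eq volume hφ (1 / 2)]
  congr 1
  ext v
  change v 0 + v 1 + v 4 = v 2 + v 3 + (1 - _) ↔ v 0 + v 1 + v 4 = 1 / 2
  constructor <;> intro h <;> linarith

theorem pairwise_aedisjoint_doubleParadox : Pairwise (Function.onFun (AEDisjoint volume)
    fun σ : Equiv.Perm Cand => {v | DoubleParadox (σ • profOf v)}) := fun σ _ hστ =>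
  measure_mono_null (fun _ hv => final_tie_of_ne hστ hv.1 hv.2) <|
    (volume_profOf_smul σ {p | p.X + p.z1 = p.Y + p.z2}).trans volume_final_tie_profOf

theorem volume_iUnion_doubleParadox :
    volume (⋃ σ : Equiv.Perm Cand, {v | DoubleParadox (σ • profOf v)}) =
      6 * ENNReal.ofReal (31 / 552960) := by
  have hvol (σ : Equiv.Perm Cand) :
      volume {v | DoubleParadox (σ • profOf v)} = ENNReal.ofReal (31 / 552960) :=
    (volume_profOf_smul σ {p | DoubleParadox p}).trans volume_doubleParadox_profOf
  have hcard : Fintype.card (Equiv.Perm Cand) = 6 := by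
    rw [Fintype.card_perm]
    rfl
  rw [measure_iUnion₀ pairwise_aedisjoint_doubleParadox fun σ =>
    (measurableSet_profOf_smul (S := {p | DoubleParadox p})
      measurableSet_doubleParadox_profOf σ).nullMeasurableSet]
  simp only [hvol, tsum_fintype, Finset.sum_const, Finset.card_univ, hcard, nsmul_eq_mul,
    Nat.cast_ofNat]

end Chart

theorem stmt18 :
    MeasureTheory.volume
      {v ∈ T | (∃ W : Cand, ¬ strictlySmallest W (profOf v) ∧ paradox W (profOf v)) ∧
               (∃ W : Cand, strictlySmallest W (profOf v) ∧ paradox W (profOf v))} =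
      (31 / 768) * (1 / 120 : ENNReal) := by
  have hunion : {v ∈ T | (∃ W : Cand, ¬ strictlySmallest W (profOf v) ∧ paradox W (profOf v)) ∧
      (∃ W : Cand, strictlySmallest W (profOf v) ∧ paradox W (profOf v))} =
      ⋃ σ : Equiv.Perm Cand, {v | Profile.DoubleParadox (σ • profOf v)} := by
    ext v
    simp only [Set.mem_iUnion, Set.mem_ofPred_eq, Profile.mem_T_iff,
      Profile.exists_smul_doubleParadox_iff]
  have hval : (6 * (31 / 552960) : ℝ) = 31 / 768 * (1 / 120) := by norm_num
  rw [hunion, volume_iUnion_doubleParadox, ← ENNReal.ofReal_ofNat 6,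
    ← ENNReal.ofReal_mul (by norm_num), hval, ENNReal.ofReal_mul (by norm_num),
    ENNReal.ofReal_div_of_pos (by norm_num), ENNReal.ofReal_div_of_pos (by norm_num)]
  norm_num
end
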